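/- For each k ≥ 1 and |q| < 1: Σ_{λ: l(λ) ≤ k} q^{|λ| + n_2(λ) - λ_1} / ((-q;q)_{λ_k} (q;q)_λ) = (q^{2k+2}, q^{2k}, q^2; q^{2k+2})_∞ / (q;q)_∞. -/

import Mathlib

/-- Finite q-Pochhammer symbol `(x;q)_n = ∏_{k=0}^{n-1} (1 - x q^k)`. -/
noncomputable def qPoch (x q : ℂ) (n : ℕ) : ℂ := ∏ k ∈ Finset.range n, (1 - x * q ^ k)

/-- Infinite q-Pochhammer symbol `(x;q)_∞ = ∏_{k≥0} (1 - x q^k)`. -/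
noncomputable def qPochInf (x q : ℂ) : ℂ := ∏' k : ℕ, (1 - x * q ^ k)

/-- Partitions with at most `k` (positive) parts: antitone sequences of naturals vanishing
from index `k` on; `l 0` is the largest part `λ_1`, and `l (k-1)` is `λ_k`. -/
def PartK (k : ℕ) : Type := {l : ℕ → ℕ // Antitone l ∧ ∀ i, k ≤ i → l i = 0}

/-- `|λ| = Σ_i λ_i`. -/
def wtK (k : ℕ) (l : PartK k) : ℕ := ∑ i ∈ Finset.range k, l.1 i

/-- `n_2(λ) = Σ_i λ_i^2`. -/
def n2K (k : ℕ) (l : PartK k) : ℕ := ∑ i ∈ Finset.range k, (l.1 i) ^ 2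

/-- `n(λ) = Σ_i binom(λ_i, 2)`. -/
def nK (k : ℕ) (l : PartK k) : ℕ := ∑ i ∈ Finset.range k, Nat.choose (l.1 i) 2

/-- `(x;q)_λ = ∏_{i=1}^{k} (x;q)_{λ_i - λ_{i+1}}` (with `λ_{k+1} = 0`). -/
noncomputable def pochK (x q : ℂ) (k : ℕ) (l : PartK k) : ℂ :=
  ∏ i ∈ Finset.range k, qPoch x q (l.1 i - l.1 (i + 1))

open Filter Topology

/-- Reciprocal of `(q;q)_m`, extended by zero to negative integers. -/
noncomputable def rq (q : ℂ) (m : ℤ) : ℂ := if m < 0 then 0 else (qPoch q q m.toNat)⁻¹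

lemma rq_neg (q : ℂ) {m : ℤ} (h : m < 0) : rq q m = 0 := by simp [rq, h]

lemma rq_nat (q : ℂ) (n : ℕ) : rq q (n : ℤ) = (qPoch q q n)⁻¹ := by simp [rq]

lemma rq_zero (q : ℂ) : rq q 0 = 1 := by simp [rq, qPoch]

lemma one_sub_pow_ne {q : ℂ} (hq : ‖q‖ < 1) (n : ℕ) : (1 : ℂ) - q ^ (n + 1) ≠ 0 := by
  intro h
  have h1 : q ^ (n + 1) = 1 := (sub_eq_zero.mp h).symm
  have h2 : ‖q‖ ^ (n + 1) < 1 := pow_lt_one₀ (norm_nonneg _) hq (by omega)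
  rw [← norm_pow, h1] at h2
  simp at h2

lemma qPoch_ne {q : ℂ} (hq : ‖q‖ < 1) (n : ℕ) : qPoch q q n ≠ 0 := by
  unfold qPoch
  rw [Finset.prod_ne_zero_iff]
  intro i _
  have := one_sub_pow_ne hq i
  rwa [pow_succ'] at this

lemma qPoch_succ (x q : ℂ) (n : ℕ) : qPoch x q (n + 1) = qPoch x q n * (1 - x * q ^ n) := by
  simp [qPoch, Finset.prod_range_succ]

lemma rq_step {q : ℂ} (hq : ‖q‖ < 1) (m : ℤ) : (1 - q ^ m) * rq q m = rq q (m - 1) := by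
  rcases lt_trichotomy m 0 with h | h | h
  · rw [rq_neg q h, rq_neg q (by omega), mul_zero]
  · subst h
    rw [rq_neg q (by omega : (0 : ℤ) - 1 < 0)]; simp
  · obtain ⟨n, rfl⟩ : ∃ n : ℕ, m = ((n + 1 : ℕ) : ℤ) := ⟨(m - 1).toNat, by omega⟩
    have e : (((n + 1 : ℕ) : ℤ) - 1) = (n : ℤ) := by push_cast; ring
    rw [e, rq_nat, rq_nat, qPoch_succ, zpow_natCast, pow_succ']
    have h1 := one_sub_pow_ne hq n
    rw [pow_succ'] at h1
    have h2 := qPoch_ne hq n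
    field_simp

lemma summable_qp {q : ℂ} (hq : ‖q‖ < 1) (x : ℂ) : Summable fun n : ℕ => ‖-(x * q ^ n)‖ := by
  simp only [norm_neg, norm_mul, norm_pow]
  exact (summable_geometric_of_lt_one (norm_nonneg _) hq).mul_left _

lemma qPoch_tendsto {q : ℂ} (hq : ‖q‖ < 1) (x : ℂ) :
    Tendsto (fun n : ℕ => qPoch x q n) atTop (𝓝 (qPochInf x q)) := by
  have := (multipliable_one_add_of_summable (summable_qp hq x)).tendsto_prod_tprod_nat
  simpa only [← sub_eq_add_neg, qPoch, qPochInf] using this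

lemma qPochInf_ne {q : ℂ} (hq : ‖q‖ < 1) : qPochInf q q ≠ 0 := by
  have := tprod_one_add_ne_zero_of_summable (f := fun n : ℕ => -(q * q ^ n)) (fun n => by
    have := one_sub_pow_ne hq n
    rwa [pow_succ', sub_eq_add_neg] at this) (summable_qp hq q)
  simpa only [← sub_eq_add_neg, qPoch, qPochInf] using this

lemma rq_tendsto {q : ℂ} (hq : ‖q‖ < 1) (a : ℤ) :
    Tendsto (fun n : ℕ => rq q ((n : ℤ) + a)) atTop (𝓝 (qPochInf q q)⁻¹) := by
  have h1 : Tendsto (fun n : ℕ => rq q (n : ℤ)) atTop (𝓝 (qPochInf q q)⁻¹) := by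
    simp only [rq_nat]
    exact (qPoch_tendsto hq q).inv₀ (qPochInf_ne hq)
  have h2 : Tendsto (fun n : ℕ => ((n : ℤ) + a).toNat) atTop atTop := by
    refine tendsto_atTop.2 fun b => ?_
    filter_upwards [eventually_ge_atTop (b + a.natAbs)] with n hn
    omega
  refine (h1.comp h2).congr' ?_
  filter_upwards [eventually_ge_atTop (a.natAbs)] with n hn
  simp only [Function.comp]
  congr 1
  omega

lemma rq_bound {q : ℂ} (hq : ‖q‖ < 1) : ∃ C : ℝ, 0 < C ∧ ∀ m : ℤ, ‖rq q m‖ ≤ C := by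
  obtain ⟨C, hC⟩ := (Metric.isBounded_range_of_tendsto _ (rq_tendsto hq 0)).exists_norm_le
  refine ⟨max C 1, by positivity, fun m => ?_⟩
  rcases lt_or_ge m 0 with h | h
  · rw [rq_neg q h]; simp
  · obtain ⟨n, rfl⟩ := Int.eq_ofNat_of_zero_le h
    exact (hC _ ⟨n, by simp⟩).trans (le_max_left _ _)

lemma summable_fin (f : ℤ → ℂ) (a b : ℤ) (h : ∀ r, r < a ∨ b < r → f r = 0) : Summable f := by
  apply summable_of_ne_finset_zero (s := Finset.Icc a b)
  intro r hr
  apply h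
  rw [Finset.mem_Icc] at hr
  omega

lemma summable_two (q : ℂ) (F : ℤ → ℂ) (a b : ℤ) :
    Summable fun r : ℤ => F r * (rq q (a - r) * rq q (b + r)) := by
  apply summable_fin _ (-b) a
  rintro r (h | h)
  · rw [rq_neg q (by omega : b + r < 0)]; simp
  · rw [rq_neg q (by omega : a - r < 0)]; simp

lemma tsum_shift (f : ℤ → ℂ) (a : ℤ) : ∑' r, f (r + a) = ∑' r, f r :=
  (Equiv.addRight a).tsum_eq f

lemma tsum_flip (f : ℤ → ℂ) (a : ℤ) : ∑' r, f (a - r) = ∑' r, f r :=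
  (Equiv.subLeft a).tsum_eq f

/-- An antisymmetric sum vanishes. -/
lemma tsum_antisymm (f : ℤ → ℂ) (a : ℤ) (h : ∀ r, f (a - r) = - f r) : ∑' r, f r = 0 := by
  have h1 := tsum_flip f a
  simp only [h, tsum_neg] at h1
  have : (2 : ℂ) * ∑' r, f r = 0 := by linear_combination -h1
  simpa using this

/-- q-Vandermonde, limiting case. -/
lemma vander {q : ℂ} (hq : ‖q‖ < 1) (hq0 : q ≠ 0) (N : ℕ) : ∀ m : ℤ,
    ∑' i : ℤ, (q ^ (i ^ 2 + m * i) * rq q (i + m)) * (rq q (N - i) * rq q (0 + i))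
      = rq q N * rq q (N + m) := by
  induction N with
  | zero =>
    intro m
    rw [tsum_eq_single 0]
    · simp [rq_zero]
    · intro i hi
      rcases lt_or_gt_of_ne hi with h | h
      · rw [rq_neg q (by omega : 0 + i < 0)]; simp
      · rw [rq_neg q (by push_cast; omega : ((0 : ℕ) : ℤ) - i < 0)]; simp
  | succ N ih =>
    intro m
    have hne := one_sub_pow_ne hq N
    apply mul_left_cancel₀ hne
    have key : ∀ i : ℤ, (1 - q ^ (N + 1)) * ((q ^ (i ^ 2 + m * i) * rq q (i + m)) *
          (rq q ((N + 1 : ℕ) - i) * rq q (0 + i)))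
        = (q ^ (i ^ 2 + m * i) * rq q (i + m)) * (rq q (N - i) * rq q (0 + i))
          + (q ^ (((N : ℤ) + 1) - i + (i ^ 2 + m * i)) * rq q (i + m)) *
            (rq q ((N + 1 : ℤ) - i) * rq q (-1 + i)) := by
      intro i
      have s1 := rq_step hq ((N + 1 : ℤ) - i)
      have s2 := rq_step hq i
      have e1 : ((N + 1 : ℤ) - i) - 1 = N - i := by ring
      have e2 : i - 1 = -1 + i := by ring
      rw [e1] at s1
      rw [e2] at s2
      have e3 : q ^ (N + 1) = q ^ ((N + 1 : ℤ) - i) * q ^ i := by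
        rw [← zpow_add₀ hq0, ← zpow_natCast]; congr 1; push_cast; ring
      rw [zpow_add₀ hq0 (((N : ℤ) + 1) - i), ← s1, ← s2, e3]
      push_cast
      simp only [zero_add]
      ring
    rw [← tsum_mul_left]
    simp only [key]
    rw [Summable.tsum_add (summable_two _ _ _ _) (summable_two _ _ _ _), ih m]
    rw [← tsum_shift _ 1]
    have key2 : ∀ i : ℤ, (q ^ (((N : ℤ) + 1) - (i + 1) + ((i + 1) ^ 2 + m * (i + 1)))
          * rq q ((i + 1) + m)) * (rq q ((N + 1 : ℤ) - (i + 1)) * rq q (-1 + (i + 1)))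
        = q ^ ((N : ℤ) + 1 + m) * ((q ^ (i ^ 2 + (m + 1) * i) * rq q (i + (m + 1))) *
          (rq q (N - i) * rq q (0 + i))) := by
      intro i
      have e1 : q ^ (((N : ℤ) + 1) - (i + 1) + ((i + 1) ^ 2 + m * (i + 1)))
          = q ^ ((N : ℤ) + 1 + m) * q ^ (i ^ 2 + (m + 1) * i) := by
        rw [← zpow_add₀ hq0]; congr 1; ring
      rw [e1, show (N + 1 : ℤ) - (i + 1) = N - i by ring, show -1 + (i + 1) = 0 + i by ring,
        show i + 1 + m = i + (m + 1) by ring]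
      ring
    simp only [key2]
    rw [tsum_mul_left, ih (m + 1)]
    have s1 := rq_step hq ((N : ℤ) + 1 + m)
    have s2 := rq_step hq ((N : ℤ) + 1)
    rw [show ((N : ℤ) + 1 + m) - 1 = N + m by ring] at s1
    rw [show ((N : ℤ) + 1) - 1 = N by ring] at s2
    rw [← s1, ← s2, show (N : ℤ) + (m + 1) = N + 1 + m by ring]
    push_cast
    rw [← zpow_natCast]
    push_cast
    ring

lemma vander' {q : ℂ} (hq : ‖q‖ < 1) (hq0 : q ≠ 0) (N m : ℤ) :
    ∑' i : ℤ, (q ^ (i ^ 2 + m * i) * rq q (i + m)) * (rq q (N - i) * rq q (0 + i))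
      = rq q N * rq q (N + m) := by
  rcases lt_or_ge N 0 with h | h
  · rw [rq_neg q h, zero_mul]
    convert tsum_zero with i
    rcases lt_or_ge i 0 with h | h
    · rw [rq_neg q (by omega : 0 + i < 0)]; simp
    · rw [rq_neg q (by omega : N - i < 0)]; simp
  · obtain ⟨n, rfl⟩ := Int.eq_ofNat_of_zero_le h
    exact vander hq hq0 n m

/-- Bailey transition, with parameter `s` (`s = 0` or `1`). -/
lemma bailey {q : ℂ} (hq : ‖q‖ < 1) (hq0 : q ≠ 0) (s n r : ℤ) :
    ∑' j : ℤ, q ^ (j ^ 2 + s * j) * rq q (n - j) * (rq q (j - r) * rq q (j + r + s))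
      = q ^ (r ^ 2 + s * r) * (rq q (n - r) * rq q (n + r + s)) := by
  rw [← tsum_shift _ r]
  have e : ∀ i : ℤ, q ^ ((i + r) ^ 2 + s * (i + r)) * rq q (n - (i + r)) *
        (rq q ((i + r) - r) * rq q ((i + r) + r + s))
      = q ^ (r ^ 2 + s * r) * ((q ^ (i ^ 2 + (2 * r + s) * i) * rq q (i + (2 * r + s))) *
        (rq q ((n - r) - i) * rq q (0 + i))) := by
    intro i
    rw [show (i + r) ^ 2 + s * (i + r) = (r ^ 2 + s * r) + (i ^ 2 + (2 * r + s) * i) by ring,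
      zpow_add₀ hq0, show n - (i + r) = n - r - i by ring, show i + r - r = 0 + i by ring,
      show i + r + r + s = i + (2 * r + s) by ring]
    ring
  simp only [e]
  rw [tsum_mul_left, vander' hq hq0, show n - r + (2 * r + s) = n + r + s by ring]

/-- Restriction of a sum to the naturals. -/
lemma tsum_int_nat (f : ℤ → ℂ) (h : ∀ r, r < 0 → f r = 0) : ∑' n : ℕ, f n = ∑' r, f r := by
  apply Function.Injective.tsum_eq (g := fun n : ℕ => (n : ℤ)) Nat.cast_injective
  intro r hr
  rcases lt_or_ge r 0 with h1 | h1
  · exact absurd (h r h1) hr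
  · obtain ⟨n, rfl⟩ := Int.eq_ofNat_of_zero_le h1
    exact ⟨n, rfl⟩

/-! ### The seed Bailey pair -/

noncomputable def seedF (q : ℂ) (n : ℤ) : ℂ :=
  ∑' r : ℤ, ((-1) ^ r * q ^ (r ^ 2)) * (rq q (n - r) * rq q (n + r))

noncomputable def seedG (q : ℂ) (n : ℤ) : ℂ :=
  ∑' r : ℤ, ((-1) ^ r * q ^ (r ^ 2)) * (rq q (n - r) * rq q ((n + 1) + r))

lemma neg_one_zpow_sub (a r : ℤ) : (-1 : ℂ) ^ (a - r) = (-1) ^ a * (-1) ^ r := by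
  rw [zpow_sub₀ (by norm_num)]
  have h : (-1 : ℂ) ^ r * (-1) ^ r = 1 := by rw [← mul_zpow]; norm_num
  have h0 : (-1 : ℂ) ^ r ≠ 0 := zpow_ne_zero _ (by norm_num)
  field_simp
  linear_combination -h

lemma seed_antisymm (q : ℂ) (n : ℤ) :
    ∑' r : ℤ, ((-1) ^ r * q ^ (r ^ 2 + r)) * (rq q (n - r) * rq q ((n + 1) + r)) = 0 := by
  apply tsum_antisymm _ (-1)
  intro r
  rw [neg_one_zpow_sub, show ((-1 : ℤ) - r) ^ 2 + (-1 - r) = r ^ 2 + r by ring,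
    show n - (-1 - r) = n + 1 + r by ring, show n + 1 + (-1 - r) = n - r by ring,
    show (-1 : ℂ) ^ (-1 : ℤ) = -1 by norm_num]
  ring

lemma seedF_eq {q : ℂ} (hq : ‖q‖ < 1) (hq0 : q ≠ 0) (n : ℤ) : seedF q n = seedG q n := by
  have key : ∀ r : ℤ, ((-1) ^ r * q ^ (r ^ 2)) * (rq q (n - r) * rq q (n + r))
      = ((-1) ^ r * q ^ (r ^ 2)) * (rq q (n - r) * rq q ((n + 1) + r))
        - q ^ (n + 1) * (((-1) ^ r * q ^ (r ^ 2 + r)) *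
          (rq q (n - r) * rq q ((n + 1) + r))) := by
    intro r
    have s := rq_step hq (n + 1 + r)
    rw [show n + 1 + r - 1 = n + r by ring, zpow_add₀ hq0 (n + 1) r] at s
    rw [← s, zpow_add₀ hq0 (r ^ 2) r]
    ring
  unfold seedF
  simp only [key]
  rw [Summable.tsum_sub (summable_two _ _ _ _) ((summable_two _ _ _ _).mul_left _),
    tsum_mul_left, seed_antisymm, mul_zero, sub_zero, seedG]

lemma seedH {q : ℂ} (hq : ‖q‖ < 1) (hq0 : q ≠ 0) (n : ℤ) :
    ∑' r : ℤ, ((-1) ^ r * q ^ (r ^ 2 - r)) * (rq q (n - r) * rq q (n + r))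
      = q ^ n * seedG q n := by
  rw [← tsum_shift _ 1]
  have key : ∀ r : ℤ, ((-1) ^ (r + 1) * q ^ ((r + 1) ^ 2 - (r + 1))) *
        (rq q (n - (r + 1)) * rq q (n + (r + 1)))
      = q ^ n * (((-1) ^ r * q ^ (r ^ 2)) * (rq q (n - r) * rq q ((n + 1) + r)))
        - ((-1) ^ r * q ^ (r ^ 2 + r)) * (rq q (n - r) * rq q ((n + 1) + r)) := by
    intro r
    have s := rq_step hq (n - r)
    rw [show n - (r + 1) = n - r - 1 by ring, ← s, show n + (r + 1) = n + 1 + r by ring,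
      zpow_add₀ (by norm_num : (-1 : ℂ) ≠ 0), show (r + 1) ^ 2 - (r + 1) = r ^ 2 + r by ring]
    have e : q ^ n * q ^ (r ^ 2) = q ^ (n - r) * q ^ (r ^ 2 + r) := by
      rw [← zpow_add₀ hq0, ← zpow_add₀ hq0]; congr 1; ring
    simp only [zpow_one]
    linear_combination (-(-1) ^ r * rq q (n - r) * rq q (n + 1 + r)) * e
  simp only [key]
  rw [Summable.tsum_sub ((summable_two _ _ _ _).mul_left _) (summable_two _ _ _ _),
    tsum_mul_left, seed_antisymm, sub_zero, seedG]

lemma seed_step {q : ℂ} (hq : ‖q‖ < 1) (hq0 : q ≠ 0) (n : ℤ) :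
    seedG q (n - 1) = (1 - q ^ n * q ^ n) * seedG q n := by
  have key : ∀ r : ℤ, ((-1) ^ r * q ^ (r ^ 2)) * (rq q ((n - 1) - r) * rq q (((n - 1) + 1) + r))
      = ((-1) ^ r * q ^ (r ^ 2)) * (rq q (n - r) * rq q (n + r))
        - q ^ n * (((-1) ^ r * q ^ (r ^ 2 - r)) * (rq q (n - r) * rq q (n + r))) := by
    intro r
    have s := rq_step hq (n - r)
    rw [show n - 1 - r = n - r - 1 by ring, ← s, show n - 1 + 1 + r = n + r by ring]
    have e : q ^ n * q ^ (r ^ 2 - r) = q ^ (n - r) * q ^ (r ^ 2) := by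
      rw [← zpow_add₀ hq0, ← zpow_add₀ hq0]; congr 1; ring
    linear_combination ((-1) ^ r * rq q (n - r) * rq q (n + r)) * e
  conv_lhs => unfold seedG
  simp only [key]
  rw [Summable.tsum_sub (summable_two _ _ _ _) ((summable_two _ _ _ _).mul_left _),
    tsum_mul_left, seedH hq hq0]
  have := seedF_eq hq hq0 n
  unfold seedF at this
  rw [this]
  ring

/-- The seed pair: `1/((-q;q)_n (q;q)_n)` as a bilateral Bailey sum. -/
lemma seed {q : ℂ} (hq : ‖q‖ < 1) (hq0 : q ≠ 0) (n : ℕ) :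
    (qPoch (-q) q n * qPoch q q n)⁻¹ = seedG q n := by
  induction n with
  | zero =>
    rw [← seedF_eq hq hq0, seedF, tsum_eq_single 0]
    · simp [qPoch, rq_zero]
    · intro i hi
      rcases lt_or_gt_of_ne hi with h | h
      · rw [rq_neg q (by push_cast; omega : ((0 : ℕ) : ℤ) + i < 0)]; simp
      · rw [rq_neg q (by push_cast; omega : ((0 : ℕ) : ℤ) - i < 0)]; simp
  | succ n ih =>
    have s := seed_step hq hq0 ((n + 1 : ℕ) : ℤ)
    rw [show (((n + 1 : ℕ) : ℤ) - 1) = (n : ℤ) by push_cast; ring, ← ih, zpow_natCast,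
      ← pow_add] at s
    have hne := one_sub_pow_ne hq (n + 1 + n)
    rw [show n + 1 + n + 1 = (n + 1) + (n + 1) by ring] at hne
    apply mul_left_cancel₀ hne
    rw [← s, qPoch_succ, qPoch_succ]
    have e : (1 : ℂ) - q ^ (n + 1 + (n + 1)) = (1 - -q * q ^ n) * (1 - q * q ^ n) := by ring
    rw [e] at hne ⊢
    have h1 := left_ne_zero_of_mul hne
    have h2 := right_ne_zero_of_mul hne
    have h3 : ∀ a b x y : ℂ, x ≠ 0 → y ≠ 0 → x * y * (a * x * (b * y))⁻¹ = (a * b)⁻¹ := by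
      intro a b x y hx hy
      rw [show a * x * (b * y) = (x * y) * (a * b) by ring, mul_inv, ← mul_assoc,
        mul_inv_cancel₀ (mul_ne_zero hx hy), one_mul]
    exact h3 _ _ _ _ h1 h2

/-! ### Jacobi triple product -/

noncomputable def jh (p t : ℂ) (a b : ℤ) : ℂ :=
  ∑' r : ℤ, ((-1) ^ r * t ^ r * p ^ (r ^ 2)) * (rq (p ^ 2) (a - r) * rq (p ^ 2) (b + r))

lemma jh_symm (p t : ℂ) (a b : ℤ) : jh p t a b = jh p t⁻¹ b a := by
  unfold jh
  rw [← tsum_flip _ 0]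
  refine tsum_congr fun r => ?_
  rw [neg_one_zpow_sub, show (0 - r) ^ 2 = r ^ 2 by ring, show a - (0 - r) = a + r by ring,
    show b + (0 - r) = b - r by ring, show t ^ (0 - r) = t⁻¹ ^ r by simp]
  simp only [zpow_zero]
  ring

lemma jh_right {p t : ℂ} (hp : ‖p‖ < 1) (hp0 : p ≠ 0) (ht : t ≠ 0) (a b : ℤ) :
    (1 - (p ^ 2) ^ (a + b)) * jh p t a b = (1 - t⁻¹ * p ^ (2 * b - 1)) * jh p t a (b - 1) := by
  have hQ : ‖p ^ 2‖ < 1 := by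
    rw [norm_pow]; exact pow_lt_one₀ (norm_nonneg _) hp (by norm_num)
  have hQ0 : p ^ 2 ≠ 0 := pow_ne_zero _ hp0
  have key : ∀ r : ℤ, (1 - (p ^ 2) ^ (a + b)) * (((-1) ^ r * t ^ r * p ^ (r ^ 2)) *
        (rq (p ^ 2) (a - r) * rq (p ^ 2) (b + r)))
      = ((-1) ^ r * t ^ r * p ^ (r ^ 2)) * (rq (p ^ 2) (a - r) * rq (p ^ 2) (b - 1 + r))
       + ((-1) ^ r * t ^ r * p ^ (2 * (b + r) + r ^ 2)) *
        (rq (p ^ 2) (a - 1 - r) * rq (p ^ 2) (b + r)) := by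
    intro r
    have s1 := rq_step hQ (a - r)
    have s2 := rq_step hQ (b + r)
    rw [show a - r - 1 = a - 1 - r by ring] at s1
    rw [show b + r - 1 = b - 1 + r by ring] at s2
    rw [← s1, ← s2, show a + b = (b + r) + (a - r) by ring, zpow_add₀ hQ0, zpow_add₀ hp0]
    have e : p ^ (2 * (b + r)) = (p ^ 2) ^ (b + r) := by
      rw [zpow_mul]; norm_cast
    rw [e]
    ring
  have key2 : ∀ r : ℤ, ((-1) ^ (r + -1) * t ^ (r + -1) * p ^ (2 * (b + (r + -1)) + (r + -1) ^ 2)) *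
        (rq (p ^ 2) (a - 1 - (r + -1)) * rq (p ^ 2) (b + (r + -1)))
      = (-(t⁻¹ * p ^ (2 * b - 1))) * (((-1) ^ r * t ^ r * p ^ (r ^ 2)) *
        (rq (p ^ 2) (a - r) * rq (p ^ 2) (b - 1 + r))) := by
    intro r
    rw [zpow_add₀ (by norm_num : (-1 : ℂ) ≠ 0), zpow_add₀ ht,
      show 2 * (b + (r + -1)) + (r + -1) ^ 2 = (2 * b - 1) + r ^ 2 by ring,
      zpow_add₀ hp0, show a - 1 - (r + -1) = a - r by ring,
      show b + (r + -1) = b - 1 + r by ring]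
    norm_num
    ring
  conv_lhs => unfold jh
  rw [← tsum_mul_left]
  simp only [key]
  rw [Summable.tsum_add (summable_two _ _ _ _) (summable_two _ _ _ _)]
  rw [← tsum_shift (fun r : ℤ => ((-1) ^ r * t ^ r * p ^ (2 * (b + r) + r ^ 2)) *
        (rq (p ^ 2) (a - 1 - r) * rq (p ^ 2) (b + r))) (-1)]
  simp only [key2]
  rw [tsum_mul_left]
  unfold jh
  ring

lemma jh_left {p t : ℂ} (hp : ‖p‖ < 1) (hp0 : p ≠ 0) (ht : t ≠ 0) (a b : ℤ) :
    (1 - (p ^ 2) ^ (a + b)) * jh p t a b = (1 - t * p ^ (2 * a - 1)) * jh p t (a - 1) b := by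
  have := jh_right hp hp0 (inv_ne_zero ht) b a
  rw [← jh_symm, ← jh_symm, inv_inv, add_comm b a] at this
  exact this

lemma jh_eq {p t : ℂ} (hp : ‖p‖ < 1) (hp0 : p ≠ 0) (ht : t ≠ 0) (n : ℕ) :
    qPoch (p ^ 2) (p ^ 2) (2 * n) * jh p t n n
      = qPoch (t * p) (p ^ 2) n * qPoch (t⁻¹ * p) (p ^ 2) n := by
  induction n with
  | zero =>
    rw [jh, tsum_eq_single 0]
    · simp [qPoch, rq_zero]
    · intro i hi
      rcases lt_or_gt_of_ne hi with h | h
      · rw [rq_neg _ (by push_cast; omega : ((0 : ℕ) : ℤ) + i < 0)]; simp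
      · rw [rq_neg _ (by push_cast; omega : ((0 : ℕ) : ℤ) - i < 0)]; simp
  | succ n ih =>
    have s1 := jh_left hp hp0 ht ((n + 1 : ℕ) : ℤ) ((n + 1 : ℕ) : ℤ)
    have s2 := jh_right hp hp0 ht (n : ℤ) ((n + 1 : ℕ) : ℤ)
    have e1 : (((n + 1 : ℕ) : ℤ) - 1) = (n : ℤ) := by push_cast; ring
    have e2 : 2 * ((n + 1 : ℕ) : ℤ) - 1 = ((2 * n + 1 : ℕ) : ℤ) := by push_cast; ring
    rw [e1, e2, zpow_natCast, ← Nat.cast_add, zpow_natCast] at s1 s2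
    rw [show 2 * (n + 1) = (2 * n + 1) + 1 by ring, qPoch_succ, qPoch_succ, qPoch_succ, qPoch_succ]
    rw [show n + 1 + (n + 1) = (2 * n + 1) + 1 by ring, pow_succ'] at s1
    rw [show n + (n + 1) = (2 * n) + 1 by ring, pow_succ'] at s2
    have e3 : t * p * (p ^ 2) ^ n = t * p ^ (2 * n + 1) := by ring
    have e4 : t⁻¹ * p * (p ^ 2) ^ n = t⁻¹ * p ^ (2 * n + 1) := by ring
    rw [e3, e4]
    linear_combination (qPoch (p ^ 2) (p ^ 2) (2 * n) * (1 - p ^ 2 * (p ^ 2) ^ (2 * n))) * s1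
      + (qPoch (p ^ 2) (p ^ 2) (2 * n) * (1 - t * p ^ (2 * n + 1))) * s2
      + ((1 - t * p ^ (2 * n + 1)) * (1 - t⁻¹ * p ^ (2 * n + 1))) * ih

lemma jtp {p t : ℂ} (hp : ‖p‖ < 1) (hp0 : p ≠ 0) (ht : t ≠ 0)
    (hs : Summable fun r : ℤ => ‖t ^ r * p ^ (r ^ 2)‖) :
    ∑' r : ℤ, (-1) ^ r * t ^ r * p ^ (r ^ 2)
      = qPochInf (p ^ 2) (p ^ 2) * qPochInf (t * p) (p ^ 2) * qPochInf (t⁻¹ * p) (p ^ 2) := by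
  have hQ : ‖p ^ 2‖ < 1 := by
    rw [norm_pow]; exact pow_lt_one₀ (norm_nonneg _) hp (by norm_num)
  obtain ⟨C, hC0, hC⟩ := rq_bound hQ
  set P := qPochInf (p ^ 2) (p ^ 2) with hP
  have hPne : P ≠ 0 := qPochInf_ne hQ
  have l1 : Tendsto (fun n : ℕ => jh p t n n) atTop
      (𝓝 (∑' r : ℤ, ((-1) ^ r * t ^ r * p ^ (r ^ 2)) * (P⁻¹ * P⁻¹))) := by
    refine tendsto_tsum_of_dominated_convergence
      (bound := fun r : ℤ => ‖t ^ r * p ^ (r ^ 2)‖ * (C * C)) (hs.mul_right _) ?_ ?_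
    · intro r
      refine Tendsto.const_mul _ (Tendsto.mul ?_ (rq_tendsto hQ r))
      simpa only [sub_eq_add_neg] using rq_tendsto hQ (-r)
    · refine Eventually.of_forall fun n r => ?_
      rw [norm_mul, norm_mul (rq _ _), mul_assoc ((-1 : ℂ) ^ r), norm_mul ((-1 : ℂ) ^ r)]
      simp only [norm_zpow, norm_neg, norm_one, one_zpow, one_mul]
      gcongr
      · exact hC _
      · exact hC _
  have l2 : Tendsto (fun n : ℕ => qPoch (p ^ 2) (p ^ 2) (2 * n) * jh p t n n) atTop
      (𝓝 (P * ∑' r : ℤ, ((-1) ^ r * t ^ r * p ^ (r ^ 2)) * (P⁻¹ * P⁻¹))) := by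
    refine Tendsto.mul ?_ l1
    refine (qPoch_tendsto hQ (p ^ 2)).comp (tendsto_atTop.2 fun b => ?_)
    filter_upwards [eventually_ge_atTop b] with n hn
    omega
  simp only [jh_eq hp hp0 ht] at l2
  have l3 := tendsto_nhds_unique l2 ((qPoch_tendsto hQ (t * p)).mul (qPoch_tendsto hQ (t⁻¹ * p)))
  rw [tsum_mul_right] at l3
  rw [mul_assoc P, ← l3]
  field_simp

/-! ### The partition sum -/

lemma qPoch_mul (q : ℂ) (n : ℕ) : (qPoch (-q) q n * qPoch q q n)⁻¹ = rq (q ^ 2) n := by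
  rw [rq_nat]
  congr 1
  unfold qPoch
  rw [← Finset.prod_mul_distrib]
  refine Finset.prod_congr rfl fun i _ => ?_
  ring

/-- Weight of the sequence `l` (all parts but the factor attached to the first one). -/
noncomputable def wt (q : ℂ) (k : ℕ) (l : ℕ → ℕ) : ℂ :=
  (∏ i ∈ Finset.range k, q ^ ((l (i + 1)) ^ 2 + l (i + 1)) * rq q ((l i : ℤ) - l (i + 1)))
    * rq (q ^ 2) (l k)

lemma wt_succ (q : ℂ) (k : ℕ) (l : ℕ → ℕ) :
    wt q (k + 1) l = q ^ ((l 1) ^ 2 + l 1) * rq q ((l 0 : ℤ) - l 1) * wt q k (fun i => l (i + 1)) := by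
  unfold wt
  rw [Finset.prod_range_succ']
  ring

/-- Split off the first part. -/
def shiftK (k : ℕ) (l : PartK (k + 1)) : ℕ × PartK k :=
  (l.1 0, ⟨fun i => l.1 (i + 1), fun _ _ h => l.2.1 (by omega), fun i hi => l.2.2 _ (by omega)⟩)

lemma shiftK_inj (k : ℕ) : Function.Injective (shiftK k) := by
  intro a b h
  have h1 : a.1 0 = b.1 0 := congrArg (fun x => x.1) h
  have h2 : ∀ i, a.1 (i + 1) = b.1 (i + 1) := fun i => congrArg (fun x => x.2.1 i) h
  apply Subtype.ext
  funext i
  cases i with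
  | zero => exact h1
  | succ i => exact h2 i

lemma shiftK_range (k : ℕ) (n : ℕ) (m : PartK k) (h : m.1 0 ≤ n) :
    (n, m) ∈ Set.range (shiftK k) := by
  refine ⟨⟨fun i => Nat.casesOn i n m.1, ?_, ?_⟩, ?_⟩
  · apply antitone_nat_of_succ_le
    intro i
    cases i with
    | zero => exact h
    | succ i => exact m.2.1 (by omega)
  · intro i hi
    cases i with
    | zero => omega
    | succ i => exact m.2.2 i (by omega)
  · rfl

lemma part1_bij : Function.Bijective (fun l : PartK 1 => l.1 0) := by
  constructor
  · intro a b h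
    apply Subtype.ext
    funext i
    cases i with
    | zero => exact h
    | succ i => rw [a.2.2 _ (by omega), b.2.2 _ (by omega)]
  · intro n
    refine ⟨⟨fun i => if i = 0 then n else 0, ?_, ?_⟩, by simp⟩
    · intro a b hab
      dsimp only
      split_ifs <;> omega
    · intro i hi
      dsimp only
      rw [if_neg (by omega)]

lemma pow_sq_le {x : ℝ} (h0 : 0 ≤ x) (h1 : x < 1) (m : ℕ) : x ^ (m ^ 2 + m) ≤ x ^ m :=
  pow_le_pow_of_le_one h0 h1.le (by omega)

lemma summ_wt {q : ℂ} (hq : ‖q‖ < 1) (k : ℕ) :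
    Summable fun l : PartK (k + 1) => ‖q‖ ^ (l.1 0) * ‖wt q k l.1‖ := by
  have hg := summable_geometric_of_lt_one (norm_nonneg q) hq
  induction k with
  | zero =>
    have hQ : ‖q ^ 2‖ < 1 := by
      rw [norm_pow]; exact pow_lt_one₀ (norm_nonneg _) hq (by norm_num)
    obtain ⟨C, hC0, hC⟩ := rq_bound hQ
    have h1 := (hg.mul_right C).comp_injective part1_bij.1
    refine Summable.of_nonneg_of_le (fun l => by positivity) (fun l => ?_) h1
    simp only [Function.comp]
    gcongr
    simpa [wt] using hC _
  | succ k ih =>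
    obtain ⟨C, hC0, hC⟩ := rq_bound hq
    have h1 := ((hg.mul_of_nonneg ih (fun n => by positivity)
      (fun l => by positivity)).mul_right C).comp_injective (shiftK_inj (k + 1))
    refine Summable.of_nonneg_of_le (fun l => by positivity) (fun l => ?_) h1
    simp only [Function.comp, shiftK]
    rw [wt_succ, norm_mul, norm_mul, norm_pow, mul_assoc (‖q‖ ^ l.1 0)]
    gcongr ‖q‖ ^ l.1 0 * ?_
    have a1 := pow_sq_le (norm_nonneg q) hq (l.1 1)
    have a2 := hC ((l.1 0 : ℤ) - l.1 1)
    calc _ ≤ ‖q‖ ^ (l.1 1) * C * ‖wt q k (fun i => l.1 (i + 1))‖ := by gcongr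
      _ = _ := by simp only [zero_add]; ring

lemma summ_natAbs {x : ℝ} (h0 : 0 ≤ x) (h1 : x < 1) : Summable fun r : ℤ => x ^ r.natAbs := by
  apply Summable.of_nat_of_neg
  · simpa using summable_geometric_of_lt_one h0 h1
  · simpa using summable_geometric_of_lt_one h0 h1

lemma zpow_bd {q : ℂ} (hq : ‖q‖ < 1) (hq0 : q ≠ 0) {e r : ℤ} (h : (r.natAbs : ℤ) ≤ e) :
    ‖q ^ e‖ ≤ ‖q‖ ^ r.natAbs := by
  rw [norm_zpow, ← zpow_natCast]
  exact zpow_le_zpow_right_of_le_one₀ (norm_pos_iff.2 hq0) hq.le h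

lemma sq_add_nonneg (r : ℤ) : 0 ≤ r ^ 2 + r := by
  have := Int.natAbs_le_self_sq r
  omega

lemma exp_bd (k : ℕ) (r : ℤ) : (r.natAbs : ℤ) ≤ r ^ 2 + k * (r ^ 2 + r) := by
  have h1 := Int.natAbs_le_self_sq r
  have h2 := mul_nonneg (Int.natCast_nonneg k) (sq_add_nonneg r)
  omega

/-- Bailey kernel. -/
noncomputable def bk (q : ℂ) (r : ℤ) (n : ℤ) : ℂ := rq q (n - r) * rq q ((n + 1) + r)

lemma bk_neg (q : ℂ) (r n : ℤ) (h : n < 0) : bk q r n = 0 := by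
  unfold bk
  rcases lt_or_ge (n - r) 0 with h1 | h1
  · rw [rq_neg q h1, zero_mul]
  · rw [rq_neg q (by omega : n + 1 + r < 0), mul_zero]

lemma bk_bailey {q : ℂ} (hq : ‖q‖ < 1) (hq0 : q ≠ 0) (r : ℤ) (n : ℕ) :
    ∑' m : ℕ, q ^ (m ^ 2 + m) * rq q ((n : ℤ) - m) * bk q r m = q ^ (r ^ 2 + r) * bk q r n := by
  have h := bailey hq hq0 1 n r
  have h2 := tsum_int_nat (fun m : ℤ => q ^ (m ^ 2 + m) * rq q ((n : ℤ) - m) * bk q r m)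
    (fun m hm => by rw [bk_neg q r m hm, mul_zero])
  have e : ∀ m : ℤ, m + r + 1 = m + 1 + r := fun m => by ring
  simp only [one_mul, e] at h
  unfold bk at h2 ⊢
  rw [← h, ← h2]
  refine tsum_congr fun m => ?_
  rw [← zpow_natCast]
  push_cast
  rfl

lemma main_sum {q : ℂ} (hq : ‖q‖ < 1) (hq0 : q ≠ 0) (k : ℕ) : ∀ (φ : ℕ → ℂ) (D : ℝ),
    (∀ n, ‖φ n‖ ≤ D * ‖q‖ ^ n) →
    ∑' l : PartK (k + 1), φ (l.1 0) * wt q k l.1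
      = ∑' r : ℤ, (-1) ^ r * q ^ (r ^ 2 + k * (r ^ 2 + r)) * ∑' n : ℕ, φ n * bk q r n := by
  have hg := summable_geometric_of_lt_one (norm_nonneg q) hq
  obtain ⟨C, hC0, hC⟩ := rq_bound hq
  have hbk : ∀ r n, ‖bk q r n‖ ≤ C * C := fun r n => by
    unfold bk
    rw [norm_mul]
    gcongr
    · exact hC _
    · exact hC _
  induction k with
  | zero =>
    intro φ D hφ
    have hD : 0 ≤ D := by simpa using (norm_nonneg _).trans (hφ 0)
    have h1 : ∑' l : PartK 1, φ (l.1 0) * wt q 0 l.1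
        = ∑' n : ℕ, φ n * rq (q ^ 2) n := by
      rw [← (Equiv.ofBijective _ part1_bij).tsum_eq]
      refine tsum_congr fun l => ?_
      simp [wt]
    rw [h1]
    have h2 : ∀ n : ℕ, φ n * rq (q ^ 2) n
        = ∑' r : ℤ, (-1) ^ r * q ^ (r ^ 2) * (φ n * bk q r n) := by
      intro n
      rw [← qPoch_mul, seed hq hq0, seedG, ← tsum_mul_left]
      refine tsum_congr fun r => ?_
      unfold bk
      ring
    simp only [h2]
    rw [← Summable.tsum_comm]
    · refine tsum_congr fun r => ?_
      rw [tsum_mul_left]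
      simp
    · refine Summable.of_norm_bounded
        (((hg.mul_of_nonneg (summ_natAbs (norm_nonneg q) hq) (fun n => by positivity)
          (fun l => by positivity))).mul_right (D * (C * C))) ?_
      rintro ⟨n, r⟩
      simp only [Function.uncurry]
      rw [norm_mul, norm_mul, norm_mul, norm_zpow (-1 : ℂ)]
      simp only [norm_neg, norm_one, one_zpow, one_mul]
      have a1 := zpow_bd hq hq0 (Int.natAbs_le_self_sq r)
      calc _ ≤ ‖q‖ ^ r.natAbs * ((D * ‖q‖ ^ n) * (C * C)) := by
            gcongr
            · exact hφ n
            · exact hbk _ _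
        _ = _ := by ring
  | succ k ih =>
    intro φ D hφ
    have hD : 0 ≤ D := by simpa using (norm_nonneg _).trans (hφ 0)
    have hsφ : ∀ m : ℕ, ∀ n, ‖φ n * rq q ((n : ℤ) - m)‖ ≤ ‖q‖ ^ n * (D * C) := by
      intro m n
      rw [norm_mul]
      calc _ ≤ (D * ‖q‖ ^ n) * C := by
            gcongr
            · exact hφ n
            · exact hC _
        _ = _ := by ring
    set φ' : ℕ → ℂ := fun m => q ^ (m ^ 2 + m) * ∑' n : ℕ, φ n * rq q ((n : ℤ) - m) with hφ'
    have hb : ∀ m, ‖φ' m‖ ≤ (∑' n : ℕ, ‖q‖ ^ n * (D * C)) * ‖q‖ ^ m := by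
      intro m
      rw [hφ', norm_mul, norm_pow, mul_comm]
      have a1 := pow_sq_le (norm_nonneg q) hq m
      have a2 := tsum_of_norm_bounded (hg.mul_right (D * C)).hasSum (hsφ m)
      gcongr
    have h1 : ∑' l : PartK (k + 1 + 1), φ (l.1 0) * wt q (k + 1) l.1
        = ∑' m : PartK (k + 1), φ' (m.1 0) * wt q k m.1 := by
      set Φ : ℕ → PartK (k + 1) → ℂ := fun n m =>
        φ n * (q ^ ((m.1 0) ^ 2 + m.1 0) * rq q ((n : ℤ) - m.1 0) * wt q k m.1) with hΦ
      have hs : Summable (Function.uncurry Φ) := by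
        refine Summable.of_norm_bounded
          ((hg.mul_of_nonneg (summ_wt hq k) (fun n => by positivity)
            (fun l => by positivity)).mul_right (D * C)) ?_
        rintro ⟨n, m⟩
        simp only [Function.uncurry, hΦ]
        rw [norm_mul, norm_mul, norm_mul, norm_pow]
        have a1 := pow_sq_le (norm_nonneg q) hq (m.1 0)
        calc _ ≤ (D * ‖q‖ ^ n) * (‖q‖ ^ (m.1 0) * C * ‖wt q k m.1‖) := by
              gcongr
              · exact hφ n
              · exact hC _
          _ = _ := by ring
      have e1 : ∑' l : PartK (k + 1 + 1), φ (l.1 0) * wt q (k + 1) l.1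
          = ∑' p : ℕ × PartK (k + 1), Function.uncurry Φ p := by
        rw [← (shiftK_inj (k + 1)).tsum_eq]
        · refine tsum_congr fun l => ?_
          rw [wt_succ]
          simp only [Function.uncurry, hΦ, shiftK, zero_add]
        · rintro ⟨n, m⟩ hnm
          apply shiftK_range
          by_contra hlt
          apply hnm
          simp only [Function.uncurry, hΦ]
          rw [rq_neg q (by omega : (n : ℤ) - m.1 0 < 0)]
          simp
      rw [e1, hs.tsum_prod]
      simp only [Function.uncurry]
      rw [← Summable.tsum_comm hs]
      refine tsum_congr fun m => ?_
      simp only [hφ', hΦ]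
      rw [← tsum_mul_left, ← tsum_mul_right]
      refine tsum_congr fun n => ?_
      ring
    rw [h1, ih φ' _ hb]
    refine tsum_congr fun r => ?_
    have h2 : ∑' m : ℕ, φ' m * bk q r m = q ^ (r ^ 2 + r) * ∑' n : ℕ, φ n * bk q r n := by
      set Ψ : ℕ → ℕ → ℂ := fun n m =>
        φ n * (q ^ (m ^ 2 + m) * rq q ((n : ℤ) - m) * bk q r m) with hΨ
      have hs : Summable (Function.uncurry Ψ) := by
        refine Summable.of_norm_bounded
          ((hg.mul_of_nonneg hg (fun n => by positivity)
            (fun l => by positivity)).mul_right (D * C * (C * C))) ?_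
        rintro ⟨n, m⟩
        simp only [Function.uncurry, hΨ]
        rw [norm_mul, norm_mul, norm_mul, norm_pow]
        have a1 := pow_sq_le (norm_nonneg q) hq m
        calc _ ≤ (D * ‖q‖ ^ n) * (‖q‖ ^ m * C * (C * C)) := by
              gcongr
              · exact hφ n
              · exact hC _
              · exact hbk _ _
          _ = _ := by ring
      have e2 : ∑' m : ℕ, φ' m * bk q r m = ∑' m : ℕ, ∑' n : ℕ, Ψ n m := by
        refine tsum_congr fun m => ?_
        simp only [hφ', hΨ]
        rw [← tsum_mul_left, ← tsum_mul_right]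
        refine tsum_congr fun n => ?_
        ring
      rw [e2, Summable.tsum_comm hs, ← tsum_mul_left]
      refine tsum_congr fun n => ?_
      simp only [hΨ]
      rw [tsum_mul_left, bk_bailey hq hq0]
      ring
    rw [h2]
    have e3 : q ^ (r ^ 2 + ((k + 1 : ℕ) : ℤ) * (r ^ 2 + r))
        = q ^ (r ^ 2 + k * (r ^ 2 + r)) * q ^ (r ^ 2 + r) := by
      rw [← zpow_add₀ hq0]; congr 1; push_cast; ring
    rw [e3]
    ring

/-- Limiting case of the transition at `a = 1`. -/
lemma gammaA {q : ℂ} (hq : ‖q‖ < 1) (hq0 : q ≠ 0) (r : ℤ) :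
    HasSum (fun n : ℕ => q ^ (n ^ 2) * (rq q ((n : ℤ) - r) * rq q ((n : ℤ) + r)))
      (q ^ (r ^ 2) * (qPochInf q q)⁻¹) := by
  have hg := summable_geometric_of_lt_one (norm_nonneg q) hq
  obtain ⟨C, hC0, hC⟩ := rq_bound hq
  have hsq : ∀ n : ℕ, ‖q‖ ^ (n ^ 2) ≤ ‖q‖ ^ n := fun n =>
    pow_le_pow_of_le_one (norm_nonneg q) hq.le (by nlinarith [Nat.zero_le n, Nat.le_self_pow (two_ne_zero) n])
  have hs : Summable (fun n : ℕ => q ^ (n ^ 2) * (rq q ((n : ℤ) - r) * rq q ((n : ℤ) + r))) := by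
    refine Summable.of_norm_bounded (hg.mul_right (C * C)) fun n => ?_
    rw [norm_mul, norm_mul, norm_pow]
    exact mul_le_mul (hsq n) (mul_le_mul (hC _) (hC _) (norm_nonneg _) hC0.le)
      (by positivity) (by positivity)
  set P := qPochInf q q with hP
  have hPne : P ≠ 0 := qPochInf_ne hq
  have fin : ∀ N : ℕ, ∑' n : ℕ, rq q ((N : ℤ) - n) *
        (q ^ (n ^ 2) * (rq q ((n : ℤ) - r) * rq q ((n : ℤ) + r)))
      = q ^ (r ^ 2) * (rq q ((N : ℤ) - r) * rq q ((N : ℤ) + r)) := by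
    intro N
    have h := bailey hq hq0 0 N r
    simp only [zero_mul, add_zero] at h
    rw [← h, ← tsum_int_nat]
    · refine tsum_congr fun n => ?_
      rw [← zpow_natCast]
      push_cast
      ring
    · intro m hm
      rcases lt_or_ge (m - r) 0 with h1 | h1
      · rw [rq_neg q h1]; simp
      · rw [rq_neg q (by omega : m + r < 0)]; simp
  have l1 : Tendsto (fun N : ℕ => ∑' n : ℕ, rq q ((N : ℤ) - n) *
        (q ^ (n ^ 2) * (rq q ((n : ℤ) - r) * rq q ((n : ℤ) + r)))) atTop
      (𝓝 (∑' n : ℕ, P⁻¹ * (q ^ (n ^ 2) * (rq q ((n : ℤ) - r) * rq q ((n : ℤ) + r))))) := by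
    refine tendsto_tsum_of_dominated_convergence
      (bound := fun n : ℕ => C * ‖q ^ (n ^ 2) * (rq q ((n : ℤ) - r) * rq q ((n : ℤ) + r))‖)
      (hs.norm.mul_left _) ?_ ?_
    · intro n
      refine Tendsto.mul_const _ ?_
      simpa only [sub_eq_add_neg] using rq_tendsto hq (-(n : ℤ))
    · refine Eventually.of_forall fun N n => ?_
      rw [norm_mul]
      gcongr
      exact hC _
  simp only [fin] at l1
  have l2 : Tendsto (fun N : ℕ => q ^ (r ^ 2) * (rq q ((N : ℤ) - r) * rq q ((N : ℤ) + r))) atTop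
      (𝓝 (q ^ (r ^ 2) * (P⁻¹ * P⁻¹))) := by
    refine Tendsto.const_mul _ (Tendsto.mul ?_ (rq_tendsto hq r))
    simpa only [sub_eq_add_neg] using rq_tendsto hq (-r)
  have l3 := tendsto_nhds_unique l1 l2
  rw [tsum_mul_left] at l3
  have l4 : ∑' n : ℕ, q ^ (n ^ 2) * (rq q ((n : ℤ) - r) * rq q ((n : ℤ) + r))
      = q ^ (r ^ 2) * P⁻¹ := by
    apply mul_left_cancel₀ (inv_ne_zero hPne)
    rw [l3]
    ring
  rw [← l4]
  exact hs.hasSum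

lemma one_sub_zpow_ne {q : ℂ} (hq : ‖q‖ < 1) (r : ℤ) (hr : r ≠ 0) :
    (1 : ℂ) - q ^ r ≠ 0 := by
  intro h
  have h1 : q ^ r = 1 := (sub_eq_zero.mp h).symm
  have h2 : ‖q‖ ^ r = 1 := by rw [← norm_zpow, h1, norm_one]
  rw [zpow_eq_one_iff_right₀ (norm_nonneg q) hq.ne] at h2
  exact hr h2

lemma gammaB {q : ℂ} (hq : ‖q‖ < 1) (hq0 : q ≠ 0) (r : ℤ) :
    ∑' n : ℕ, q ^ (n ^ 2) * bk q r n
      = (q ^ (r ^ 2) + q ^ ((r + 1) ^ 2)) * (qPochInf q q)⁻¹ := by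
  have h0 := gammaA hq hq0 r
  have h1 := (gammaA hq hq0 (r + 1)).mul_left (q ^ (2 * r + 1))
  have h2 := h0.sub h1
  have hne := one_sub_zpow_ne hq (2 * r + 1) (by omega)
  apply mul_left_cancel₀ hne
  rw [← tsum_mul_left]
  have key : ∀ n : ℕ, (1 - q ^ (2 * r + 1)) * (q ^ (n ^ 2) * bk q r n)
      = q ^ (n ^ 2) * (rq q ((n : ℤ) - r) * rq q ((n : ℤ) + r))
       - q ^ (2 * r + 1) * (q ^ (n ^ 2) * (rq q ((n : ℤ) - (r + 1)) * rq q ((n : ℤ) + (r + 1)))) := by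
    intro n
    have s1 := rq_step hq ((n : ℤ) - r)
    have s2 := rq_step hq ((n : ℤ) + 1 + r)
    rw [show (n : ℤ) + 1 + r - 1 = n + r by ring] at s2
    rw [show (n : ℤ) - (r + 1) = n - r - 1 by ring, ← s1, ← s2,
      show (n : ℤ) + (r + 1) = n + 1 + r by ring]
    have e : q ^ ((n : ℤ) + 1 + r) = q ^ (2 * r + 1) * q ^ ((n : ℤ) - r) := by
      rw [← zpow_add₀ hq0]; congr 1; ring
    unfold bk
    rw [e]
    ring
  simp only [key]
  rw [h2.tsum_eq]
  have e : q ^ ((r + 1) ^ 2) = q ^ (2 * r + 1) * q ^ (r ^ 2) := by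
    rw [← zpow_add₀ hq0]; congr 1; ring
  rw [e]
  ring

lemma theta_sum {q : ℂ} (hq : ‖q‖ < 1) (hq0 : q ≠ 0) (k : ℕ) :
    ∑' r : ℤ, (-1) ^ r * q ^ (r ^ 2 + k * (r ^ 2 + r)) *
        ((q ^ (r ^ 2) + q ^ ((r + 1) ^ 2)) * (qPochInf q q)⁻¹)
      = (∑' r : ℤ, (-1) ^ r * (q ^ k) ^ r * (q ^ (k + 2)) ^ (r ^ 2)) * (qPochInf q q)⁻¹ := by
  have key : ∀ r : ℤ, (-1) ^ r * q ^ (r ^ 2 + k * (r ^ 2 + r)) *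
        ((q ^ (r ^ 2) + q ^ ((r + 1) ^ 2)) * (qPochInf q q)⁻¹)
      = ((-1) ^ r * q ^ (r ^ 2 + k * (r ^ 2 + r) + r ^ 2)
        + (-1) ^ r * q ^ (r ^ 2 + k * (r ^ 2 + r) + (r + 1) ^ 2)) * (qPochInf q q)⁻¹ := by
    intro r
    rw [zpow_add₀ hq0 (r ^ 2 + k * (r ^ 2 + r)), zpow_add₀ hq0 (r ^ 2 + k * (r ^ 2 + r))]
    ring
  simp only [key]
  have hsum : ∀ g : ℤ → ℤ, (∀ r, 0 ≤ g r) →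
      Summable fun r : ℤ => (-1 : ℂ) ^ r * q ^ (r ^ 2 + k * (r ^ 2 + r) + g r) := by
    intro g hg
    refine Summable.of_norm_bounded (summ_natAbs (norm_nonneg q) hq) fun r => ?_
    rw [norm_mul, norm_zpow (-1 : ℂ)]
    simp only [norm_neg, norm_one, one_zpow, one_mul]
    apply zpow_bd hq hq0
    have := exp_bd k r
    have := hg r
    omega
  rw [tsum_mul_right, Summable.tsum_add (hsum (fun r => r ^ 2) fun r => by positivity)
    (hsum (fun r => (r + 1) ^ 2) fun r => by positivity)]
  have hz : ∑' r : ℤ, (-1 : ℂ) ^ r * q ^ (r ^ 2 + k * (r ^ 2 + r) + (r + 1) ^ 2) = 0 := by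
    apply tsum_antisymm _ (-1)
    intro r
    rw [neg_one_zpow_sub, show (-1 : ℂ) ^ (-1 : ℤ) = -1 by norm_num,
      show (-1 - r) ^ 2 + k * ((-1 - r) ^ 2 + (-1 - r)) + (-1 - r + 1) ^ 2
        = r ^ 2 + k * (r ^ 2 + r) + (r + 1) ^ 2 by ring]
    ring
  rw [hz, add_zero]
  congr 1
  refine tsum_congr fun r => ?_
  rw [mul_assoc]
  congr 1
  rw [← zpow_natCast, ← zpow_natCast, ← zpow_mul, ← zpow_mul, ← zpow_add₀ hq0]
  congr 1
  push_cast
  ring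

lemma theta_prod {q : ℂ} (hq : ‖q‖ < 1) (hq0 : q ≠ 0) (k : ℕ) :
    ∑' r : ℤ, (-1) ^ r * (q ^ k) ^ r * (q ^ (k + 2)) ^ (r ^ 2)
      = qPochInf (q ^ (2 * (k + 1) + 2)) (q ^ (2 * (k + 1) + 2)) *
          qPochInf (q ^ (2 * (k + 1))) (q ^ (2 * (k + 1) + 2)) *
          qPochInf (q ^ 2) (q ^ (2 * (k + 1) + 2)) := by
  have hp : ‖q ^ (k + 2)‖ < 1 := by
    rw [norm_pow]; exact pow_lt_one₀ (norm_nonneg _) hq (by omega)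
  rw [jtp hp (pow_ne_zero _ hq0) (pow_ne_zero _ hq0)]
  · rw [show (q ^ (k + 2)) ^ 2 = q ^ (2 * (k + 1) + 2) by ring,
      show q ^ k * q ^ (k + 2) = q ^ (2 * (k + 1)) by ring,
      show (q ^ k)⁻¹ * q ^ (k + 2) = q ^ 2 by rw [pow_add]; field_simp]
  · refine Summable.of_nonneg_of_le (fun r => norm_nonneg _) (fun r => ?_)
      (summ_natAbs (norm_nonneg q) hq)
    rw [← zpow_natCast, ← zpow_natCast, ← zpow_mul, ← zpow_mul, ← zpow_add₀ hq0]
    apply zpow_bd hq hq0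
    have h1 := exp_bd k r
    have h2 : (k : ℤ) * r + ((k + 2 : ℕ) : ℤ) * r ^ 2 = (r ^ 2 + k * (r ^ 2 + r)) + r ^ 2 := by
      push_cast; ring
    have h3 : 0 ≤ r ^ 2 := by positivity
    omega

lemma term_eq {q : ℂ} (k : ℕ) (l : PartK (k + 1)) :
    q ^ (wtK (k + 1) l + n2K (k + 1) l - l.1 0) /
          (qPoch (-q) q (l.1 k) * pochK q q (k + 1) l)
      = q ^ ((l.1 0) ^ 2) * wt q k l.1 := by
  have e1 : wtK (k + 1) l + n2K (k + 1) l - l.1 0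
      = (l.1 0) ^ 2 + ∑ i ∈ Finset.range k, ((l.1 (i + 1)) ^ 2 + l.1 (i + 1)) := by
    unfold wtK n2K
    rw [Finset.sum_range_succ', Finset.sum_range_succ', Finset.sum_add_distrib]
    omega
  have e2 : pochK q q (k + 1) l
      = (∏ i ∈ Finset.range k, qPoch q q (l.1 i - l.1 (i + 1))) * qPoch q q (l.1 k) := by
    unfold pochK
    rw [Finset.prod_range_succ, l.2.2 (k + 1) le_rfl, Nat.sub_zero]
  have e3 : ∀ i, rq q ((l.1 i : ℤ) - l.1 (i + 1)) = (qPoch q q (l.1 i - l.1 (i + 1)))⁻¹ := by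
    intro i
    rw [← rq_nat, Nat.cast_sub (l.2.1 (by omega))]
  unfold wt
  rw [e1, e2, pow_add, ← Finset.prod_pow_eq_pow_sum, ← qPoch_mul, Finset.prod_mul_distrib,
    div_eq_mul_inv]
  simp only [e3, Finset.prod_inv_distrib, mul_inv]
  ring

lemma rr_zero (k : ℕ) :
    ∑' lam : PartK (k + 1),
        (0 : ℂ) ^ (wtK (k + 1) lam + n2K (k + 1) lam - lam.1 0) /
          (qPoch (-0) 0 (lam.1 k) * pochK 0 0 (k + 1) lam) = 1 := by
  rw [tsum_eq_single ⟨fun _ => 0, fun _ _ _ => le_rfl, fun _ _ => rfl⟩]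
  · simp [wtK, n2K, qPoch, pochK]
  · intro l hl
    rw [term_eq]
    have h0 : l.1 0 ≠ 0 := by
      intro h
      apply hl
      apply Subtype.ext
      funext i
      have := l.2.1 (Nat.zero_le i)
      show l.1 i = 0
      omega
    rw [zero_pow (pow_ne_zero _ h0), zero_mul]

/-- Identity (24): for `k ≥ 1`, `|q| < 1`,
`Σ_{l(λ)≤k} q^{|λ|+n_2(λ)-λ_1} / ((-q;q)_{λ_k} (q;q)_λ)
  = (q^{2k+2},q^{2k},q^2;q^{2k+2})_∞ / (q;q)_∞`. -/
theorem rr_type_24 (k : ℕ) (hk : 1 ≤ k) (q : ℂ) (hq : ‖q‖ < 1) :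
    ∑' lam : PartK k,
        q ^ (wtK k lam + n2K k lam - lam.1 0) /
          (qPoch (-q) q (lam.1 (k - 1)) * pochK q q k lam)
      = qPochInf (q ^ (2 * k + 2)) (q ^ (2 * k + 2)) *
          qPochInf (q ^ (2 * k)) (q ^ (2 * k + 2)) *
          qPochInf (q ^ 2) (q ^ (2 * k + 2)) / qPochInf q q := by
  obtain ⟨k, rfl⟩ : ∃ j, k = j + 1 := ⟨k - 1, by omega⟩
  rw [Nat.add_sub_cancel]
  by_cases hq0 : q = 0
  · subst hq0
    rw [rr_zero]
    simp [qPochInf]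
  · simp only [term_eq]
    have hsq : ∀ n : ℕ, ‖q ^ (n ^ 2)‖ ≤ 1 * ‖q‖ ^ n := fun n => by
      rw [one_mul, norm_pow]
      exact pow_le_pow_of_le_one (norm_nonneg q) hq.le (Nat.le_self_pow two_ne_zero n)
    rw [main_sum hq hq0 k (fun n => q ^ (n ^ 2)) 1 hsq]
    simp only [gammaB hq hq0]
    rw [theta_sum hq hq0, theta_prod hq hq0, div_eq_mul_inv]
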